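/- For p > 0 let Z_p := (A_1^{p/2} A_2^{p/2} ⋯ A_{m-1}^{p/2} A_m^p A_{m-1}^{p/2} ⋯ A_2^{p/2} A_1^{p/2})^{1/p} and let λ_1(p) be its largest eigenvalue. Then λ_1 := lim_{p→∞} λ_1(p) exists and λ_1 = max{ a^{(1)}_{i_1} a^{(2)}_{i_2} ⋯ a^{(m)}_{i_m} : w(i_1, i_2, …, i_m) ≠ 0 }, where w(i_1,…,i_m) := Σ { w^{(1)}_{i_1 j_2} w^{(2)}_{j_2 j_3} ⋯ w^{(m-1)}_{j_{m-1} i_m} : 1 ≤ j_2,…,j_{m-1} ≤ d and a^{(2)}_{j_2} ⋯ a^{(m-1)}_{j_{m-1}} = a^{(2)}_{i_2} ⋯ a^{(m-1)}_{i_{m-1}} }. Moreover a^{(1)}_1 ⋯ a^{(m)}_1 ≥ λ_1 ≥ a^{(1)}_d ⋯ a^{(m)}_d. -/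

import Mathlib

open Matrix Filter Topology Finset
open scoped ComplexOrder

/-- Functional-calculus power of a (Hermitian, in practice positive semidefinite)
matrix, with the convention `0 ^ r = 0` for `r > 0`. -/
noncomputable def psdPow {d : ℕ} (A : Matrix (Fin d) (Fin d) ℂ) (r : ℝ) :
    Matrix (Fin d) (Fin d) ℂ :=
  if hA : A.IsHermitian then
    (hA.eigenvectorUnitary : Matrix (Fin d) (Fin d) ℂ) *
      Matrix.diagonal (fun i => ((hA.eigenvalues i ^ r : ℝ) : ℂ)) *
      star (hA.eigenvectorUnitary : Matrix (Fin d) (Fin d) ℂ)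
  else 0

/-- The eigenvalues of a Hermitian matrix, sorted in decreasing order
(with multiplicities). -/
noncomputable def eigsDesc {d : ℕ} (A : Matrix (Fin d) (Fin d) ℂ) : Fin d → ℝ :=
  if hA : A.IsHermitian then
    fun i => hA.eigenvalues (Tuple.sort hA.eigenvalues i.rev)
  else 0

/-- For `n + 1` matrices `A_0, …, A_n`, this is
`Z_p = (A_0^{p/2} A_1^{p/2} ⋯ A_{n-1}^{p/2} A_n^p A_{n-1}^{p/2} ⋯ A_1^{p/2} A_0^{p/2})^{1/p}`. -/
noncomputable def ZmatM {d n : ℕ} (A : Fin (n + 1) → Matrix (Fin d) (Fin d) ℂ)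
    (p : ℝ) : Matrix (Fin d) (Fin d) ℂ :=
  psdPow ((List.ofFn fun l : Fin n => psdPow (A l.castSucc) (p / 2)).prod *
    psdPow (A (Fin.last n)) p *
    ((List.ofFn fun l : Fin n => psdPow (A l.castSucc) (p / 2)).reverse).prod) (1 / p)

/-- The quantity `w(i_0, …, i_n)`: the sum of products
`w^{(0)}_{i_0 j_1} w^{(1)}_{j_1 j_2} ⋯ w^{(n-1)}_{j_{n-1} i_n}` (where
`w^{(l)} = V_l* V_{l+1}`) over all middle index tuples `j` whose product of
intermediate eigenvalues agrees with that of `i`. -/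
noncomputable def wChain {d n : ℕ} (V : Fin (n + 1) → Matrix (Fin d) (Fin d) ℂ)
    (a : Fin (n + 1) → Fin d → ℝ) (i : Fin (n + 1) → Fin d) : ℂ :=
  ∑ j : Fin (n + 1) → Fin d,
    Set.indicator
      {j : Fin (n + 1) → Fin d |
        j 0 = i 0 ∧ j (Fin.last n) = i (Fin.last n) ∧
        (∏ l ∈ Finset.univ.filter (fun l : Fin (n + 1) => l ≠ 0 ∧ l ≠ Fin.last n),
            a l (j l)) =
          ∏ l ∈ Finset.univ.filter (fun l : Fin (n + 1) => l ≠ 0 ∧ l ≠ Fin.last n),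
            a l (i l)}
      (fun j => ∏ l : Fin n, ((V l.castSucc)ᴴ * V l.succ) (j l.castSucc) (j l.succ)) j


/-- Two diagonalizations of the same matrix are intertwined entrywise. -/
lemma diag_intertwine {d : ℕ} {U V : Matrix (Fin d) (Fin d) ℂ} {x y : Fin d → ℝ}
    (hU : U ∈ Matrix.unitaryGroup (Fin d) ℂ) (hV : V ∈ Matrix.unitaryGroup (Fin d) ℂ)
    (h : U * Matrix.diagonal (fun i => (x i : ℂ)) * Uᴴ
      = V * Matrix.diagonal (fun i => (y i : ℂ)) * Vᴴ) (i j : Fin d) :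
    (Vᴴ * U) i j = 0 ∨ x j = y i := by
  have hU1 : Uᴴ * U = 1 := Matrix.mem_unitaryGroup_iff'.1 hU
  have hV1 : Vᴴ * V = 1 := Matrix.mem_unitaryGroup_iff'.1 hV
  have e : (Vᴴ * U) * Matrix.diagonal (fun i => (x i : ℂ))
      = Matrix.diagonal (fun i => (y i : ℂ)) * (Vᴴ * U) := by
    calc (Vᴴ * U) * Matrix.diagonal (fun i => (x i : ℂ))
        = Vᴴ * (U * Matrix.diagonal (fun i => (x i : ℂ)) * Uᴴ) * U := by
          simp only [Matrix.mul_assoc, hU1, Matrix.mul_one]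
      _ = (Vᴴ * V) * Matrix.diagonal (fun i => (y i : ℂ)) * (Vᴴ * U) := by
          rw [h]; simp only [Matrix.mul_assoc]
      _ = _ := by rw [hV1, Matrix.one_mul]
  have e2 := congrFun (congrFun e i) j
  rw [Matrix.mul_diagonal, Matrix.diagonal_mul] at e2
  by_cases h0 : (Vᴴ * U) i j = 0
  · exact Or.inl h0
  · right
    rw [mul_comm] at e2
    exact_mod_cast mul_right_cancel₀ h0 e2

lemma diag_fun_eq {d : ℕ} {U V : Matrix (Fin d) (Fin d) ℂ} {x y : Fin d → ℝ}
    (hU : U ∈ Matrix.unitaryGroup (Fin d) ℂ) (hV : V ∈ Matrix.unitaryGroup (Fin d) ℂ)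
    (h : U * Matrix.diagonal (fun i => (x i : ℂ)) * Uᴴ
      = V * Matrix.diagonal (fun i => (y i : ℂ)) * Vᴴ) (f : ℝ → ℝ) :
    U * Matrix.diagonal (fun i => (f (x i) : ℂ)) * Uᴴ
      = V * Matrix.diagonal (fun i => (f (y i) : ℂ)) * Vᴴ := by
  have hU1 : U * Uᴴ = 1 := Matrix.mem_unitaryGroup_iff.1 hU
  have hV1 : V * Vᴴ = 1 := Matrix.mem_unitaryGroup_iff.1 hV
  have e : (Vᴴ * U) * Matrix.diagonal (fun i => (f (x i) : ℂ))
      = Matrix.diagonal (fun i => (f (y i) : ℂ)) * (Vᴴ * U) := by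
    ext i j
    rw [Matrix.mul_diagonal, Matrix.diagonal_mul]
    rcases diag_intertwine hU hV h i j with h0 | h0
    · rw [h0]; simp
    · rw [h0, mul_comm]
  calc U * Matrix.diagonal (fun i => (f (x i) : ℂ)) * Uᴴ
      = (V * Vᴴ) * U * Matrix.diagonal (fun i => (f (x i) : ℂ)) * Uᴴ := by
        rw [hV1, Matrix.one_mul]
    _ = V * ((Vᴴ * U) * Matrix.diagonal (fun i => (f (x i) : ℂ))) * Uᴴ := by
        simp only [Matrix.mul_assoc]
    _ = V * Matrix.diagonal (fun i => (f (y i) : ℂ)) * Vᴴ * (U * Uᴴ) := by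
        rw [e]; simp only [Matrix.mul_assoc]
    _ = _ := by rw [hU1, Matrix.mul_one]

lemma diag_mem {d : ℕ} {U V : Matrix (Fin d) (Fin d) ℂ} {x y : Fin d → ℝ}
    (hU : U ∈ Matrix.unitaryGroup (Fin d) ℂ) (hV : V ∈ Matrix.unitaryGroup (Fin d) ℂ)
    (h : U * Matrix.diagonal (fun i => (x i : ℂ)) * Uᴴ
      = V * Matrix.diagonal (fun i => (y i : ℂ)) * Vᴴ) (j : Fin d) : ∃ i, x j = y i := by
  by_contra! hc
  have hU1 : Uᴴ * U = 1 := Matrix.mem_unitaryGroup_iff'.1 hU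
  have hV1 : V * Vᴴ = 1 := Matrix.mem_unitaryGroup_iff.1 hV
  have h0 : ∀ i, (Vᴴ * U) i j = 0 := fun i =>
    (diag_intertwine hU hV h i j).resolve_right (hc i)
  have h1 : (Vᴴ * U)ᴴ * (Vᴴ * U) = 1 := by
    rw [Matrix.conjTranspose_mul, Matrix.conjTranspose_conjTranspose]
    calc Uᴴ * V * (Vᴴ * U) = Uᴴ * (V * Vᴴ) * U := by simp only [Matrix.mul_assoc]
      _ = 1 := by rw [hV1, Matrix.mul_one, hU1]
  have h2 := congrFun (congrFun h1 j) j
  rw [Matrix.mul_apply] at h2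
  simp [h0] at h2

lemma diag_herm {d : ℕ} (V : Matrix (Fin d) (Fin d) ℂ) (y : Fin d → ℝ) :
    (V * Matrix.diagonal (fun i => (y i : ℂ)) * Vᴴ).IsHermitian := by
  unfold Matrix.IsHermitian
  simp only [Matrix.conjTranspose_mul, Matrix.conjTranspose_conjTranspose,
    Matrix.diagonal_conjTranspose, Matrix.mul_assoc]
  congr 3
  ext i
  simp

lemma herm_spec {d : ℕ} {C : Matrix (Fin d) (Fin d) ℂ} (hC : C.IsHermitian) :
    C = (hC.eigenvectorUnitary : Matrix (Fin d) (Fin d) ℂ) *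
      Matrix.diagonal (fun i => (hC.eigenvalues i : ℂ)) *
      (hC.eigenvectorUnitary : Matrix (Fin d) (Fin d) ℂ)ᴴ := by
  conv_lhs => rw [hC.spectral_theorem]
  rfl

lemma psdPow_eq {d : ℕ} {V : Matrix (Fin d) (Fin d) ℂ} {y : Fin d → ℝ}
    (hV : V ∈ Matrix.unitaryGroup (Fin d) ℂ) (r : ℝ) :
    psdPow (V * Matrix.diagonal (fun i => (y i : ℂ)) * Vᴴ) r
      = V * Matrix.diagonal (fun i => ((y i ^ r : ℝ) : ℂ)) * Vᴴ := by
  have hC := diag_herm V y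
  unfold psdPow
  rw [dif_pos hC]
  exact diag_fun_eq (hC.eigenvectorUnitary).2 hV (herm_spec hC).symm (fun t => t ^ r)

lemma eigsDesc_eq {d : ℕ} (hd : 0 < d) {V : Matrix (Fin d) (Fin d) ℂ} {y : Fin d → ℝ}
    (hV : V ∈ Matrix.unitaryGroup (Fin d) ℂ) :
    (∃ i, eigsDesc (V * Matrix.diagonal (fun i => (y i : ℂ)) * Vᴴ) ⟨0, hd⟩ = y i) ∧
    ∀ i, y i ≤ eigsDesc (V * Matrix.diagonal (fun i => (y i : ℂ)) * Vᴴ) ⟨0, hd⟩ := by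
  have hC := diag_herm V y
  unfold eigsDesc
  rw [dif_pos hC]
  refine ⟨diag_mem (hC.eigenvectorUnitary).2 hV (herm_spec hC).symm _, fun i => ?_⟩
  obtain ⟨j, hj⟩ := diag_mem hV (hC.eigenvectorUnitary).2 (herm_spec hC) i
  rw [hj]
  have hm := Tuple.monotone_sort hC.eigenvalues
  have := @hm ((Tuple.sort hC.eigenvalues).symm j) (Fin.rev ⟨0, hd⟩) (by
    rw [Fin.le_def, Fin.val_rev]; simp only; omega)
  simpa using this

/-- Path expansion of a product. -/
lemma path_expand {d : ℕ} : ∀ (n : ℕ) (V : Fin (n + 1) → Matrix (Fin d) (Fin d) ℂ)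
    (D : Fin (n + 1) → Fin d → ℂ),
    (List.ofFn fun l => V l * Matrix.diagonal (D l) * (V l)ᴴ).prod
      = V 0 * (Matrix.of fun i k => ∑ j : Fin (n + 1) → Fin d,
        if j 0 = i ∧ j (Fin.last n) = k then
          (∏ l : Fin n, ((V l.castSucc)ᴴ * V l.succ) (j l.castSucc) (j l.succ)) *
            ∏ l, D l (j l) else 0) * (V (Fin.last n))ᴴ
  | 0, V, D => by
    simp only [List.ofFn_succ, List.ofFn_zero, List.prod_cons, List.prod_nil, mul_one]
    have : Fin.last 0 = 0 := rfl
    rw [this]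
    congr 2
    ext i k
    rw [Matrix.of_apply, ← (Equiv.funUnique (Fin 1) (Fin d)).symm.sum_comp]
    simp only [Matrix.diagonal_apply]
    by_cases h : i = k
    · subst h
      simp [Finset.sum_ite_eq]
    · rw [if_neg h]
      symm
      apply Finset.sum_eq_zero
      intro x _
      rw [if_neg]
      rintro ⟨h1, h2⟩
      exact h (h1.symm.trans h2)
  | n + 1, V, D => by
    rw [List.ofFn_succ, List.prod_cons,
      path_expand n (fun l => V l.succ) (fun l => D l.succ)]
    simp only [Fin.succ_last, Nat.succ_eq_add_one]
    simp only [← Matrix.mul_assoc]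
    congr 1
    simp only [Matrix.mul_assoc]
    congr 1
    rw [← Matrix.mul_assoc ((V 0)ᴴ)]
    ext i k
    rw [Matrix.diagonal_mul, Matrix.mul_apply, Matrix.of_apply,
      ← (Fin.consEquiv (fun _ : Fin (n + 2) => Fin d)).sum_comp, Fintype.sum_prod_type]
    simp only [Matrix.of_apply, Fin.consEquiv_apply, Fin.cons_zero]
    symm
    rw [Finset.sum_eq_single i]
    · symm
      rw [Finset.mul_sum]
      simp only [Finset.mul_sum]
      rw [Finset.sum_comm]
      apply Finset.sum_congr rfl
      intro j _
      rw [Finset.sum_eq_single (j 0)]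
      · have hl : (Fin.cons i j : Fin (n + 2) → Fin d) (Fin.last (n + 1)) = j (Fin.last n) := by
          rw [← Fin.succ_last, Fin.cons_succ]
        rw [hl]
        by_cases h : j (Fin.last n) = k
        · simp only [h, and_self, if_true]
          rw [Fin.prod_univ_succ (fun x : Fin (n + 2) =>
              D x ((Fin.cons i j : Fin (n + 2) → Fin d) x)),
            Fin.prod_univ_succ (fun x : Fin (n + 1) => ((V x.castSucc)ᴴ * V x.succ)
              ((Fin.cons i j : Fin (n + 2) → Fin d) x.castSucc)
              ((Fin.cons i j : Fin (n + 2) → Fin d) x.succ))]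
          simp only [Fin.castSucc_zero, Fin.cons_zero, Fin.cons_succ, ← Fin.succ_castSucc]
          ring
        · simp [h]
      · intro b _ hb
        rw [if_neg (fun h => hb h.1.symm)]
        simp
      · simp
    · intro b _ hb
      apply Finset.sum_eq_zero
      intro j _
      rw [if_neg (fun h => hb h.1)]
    · simp

/-- Total weight of paths from `i` to `k` with eigenvalue product `t`. -/
noncomputable def cW {d n : ℕ} (V : Fin (n + 1) → Matrix (Fin d) (Fin d) ℂ)
    (a : Fin (n + 1) → Fin d → ℝ) (i k : Fin d) (t : ℝ) : ℂ :=
  ∑ j : Fin (n + 1) → Fin d, if (∏ l, a l (j l)) = t then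
    (if j 0 = i ∧ j (Fin.last n) = k then
      (∏ l : Fin n, ((V l.castSucc)ᴴ * V l.succ) (j l.castSucc) (j l.succ)) else 0) else 0

lemma wChain_eq_cW {d n : ℕ} (V : Fin (n + 1) → Matrix (Fin d) (Fin d) ℂ)
    (a : Fin (n + 1) → Fin d → ℝ) (i : Fin (n + 1) → Fin d) (hi : (∏ l, a l (i l)) ≠ 0) :
    wChain V a i = cW V a (i 0) (i (Fin.last n)) (∏ l, a l (i l)) := by
  unfold wChain cW
  apply Finset.sum_congr rfl
  intro j _
  rw [Set.indicator_apply, ← ite_and]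
  refine if_congr ?_ rfl rfl
  rw [Set.mem_setOf_eq]
  suffices h : j 0 = i 0 → j (Fin.last n) = i (Fin.last n) →
      ((∏ l ∈ Finset.univ.filter (fun l : Fin (n + 1) => l ≠ 0 ∧ l ≠ Fin.last n),
            a l (j l)) =
          ∏ l ∈ Finset.univ.filter (fun l : Fin (n + 1) => l ≠ 0 ∧ l ≠ Fin.last n),
            a l (i l) ↔ (∏ l, a l (j l)) = ∏ l, a l (i l)) by tauto
  intro h0 h1
  rw [← Finset.prod_filter_mul_prod_filter_not Finset.univ
      (fun l : Fin (n + 1) => l ≠ 0 ∧ l ≠ Fin.last n) (fun l => a l (i l))] at hi ⊢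
  rw [← Finset.prod_filter_mul_prod_filter_not Finset.univ
      (fun l : Fin (n + 1) => l ≠ 0 ∧ l ≠ Fin.last n) (fun l => a l (j l))]
  have he : ∏ l ∈ Finset.univ.filter (fun l : Fin (n + 1) => ¬ (l ≠ 0 ∧ l ≠ Fin.last n)),
      a l (j l) = ∏ l ∈ Finset.univ.filter
        (fun l : Fin (n + 1) => ¬ (l ≠ 0 ∧ l ≠ Fin.last n)), a l (i l) := by
    apply Finset.prod_congr rfl
    intro l hl
    rw [Finset.mem_filter] at hl
    have : l = 0 ∨ l = Fin.last n := by tauto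
    rcases this with rfl | rfl
    · rw [h0]
    · rw [h1]
  rw [he]
  exact (mul_left_inj' (right_ne_zero_of_mul hi)).symm

/-- Set of eigenvalue products. -/
noncomputable def pW {d n : ℕ} (a : Fin (n + 1) → Fin d → ℝ) : Finset ℝ :=
  Finset.univ.image (fun j : Fin (n + 1) → Fin d => ∏ l, a l (j l))

/-- Entries of the conjugated half product. -/
noncomputable def yW {d n : ℕ} (V : Fin (n + 1) → Matrix (Fin d) (Fin d) ℂ)
    (a : Fin (n + 1) → Fin d → ℝ) (p : ℝ) : Matrix (Fin d) (Fin d) ℂ :=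
  Matrix.of fun i k => ∑ t ∈ pW a, cW V a i k t * ((t ^ (p / 2) : ℝ) : ℂ)

lemma half_prod {d n : ℕ} (V : Fin (n + 1) → Matrix (Fin d) (Fin d) ℂ)
    (a : Fin (n + 1) → Fin d → ℝ) (ha0 : ∀ l i, 0 ≤ a l i) (p : ℝ) :
    (List.ofFn fun l => V l * Matrix.diagonal (fun i => ((a l i ^ (p / 2) : ℝ) : ℂ))
      * (V l)ᴴ).prod = V 0 * yW V a p * (V (Fin.last n))ᴴ := by
  rw [path_expand]
  congr 2
  ext i k
  simp only [yW, Matrix.of_apply, cW, Finset.sum_mul]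
  rw [Finset.sum_comm]
  apply Finset.sum_congr rfl
  intro j _
  rw [Finset.sum_eq_single (∏ l, a l (j l))]
  · rw [if_pos rfl, ite_mul, zero_mul,
      ← Real.finset_prod_rpow _ _ (fun l _ => ha0 l (j l)), Complex.ofReal_prod]
  · intro b _ hb
    rw [if_neg hb.symm, zero_mul]
  · intro h
    exact absurd (Finset.mem_image_of_mem _ (Finset.mem_univ j)) h

lemma cW_sum {d n : ℕ} (V : Fin (n + 1) → Matrix (Fin d) (Fin d) ℂ)
    (hV : ∀ l, V l ∈ Matrix.unitaryGroup (Fin d) ℂ) (hd : 0 < d) :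
    ∃ i k : Fin d, (∑ j : Fin (n + 1) → Fin d, if j 0 = i ∧ j (Fin.last n) = k then
      (∏ l : Fin n, ((V l.castSucc)ᴴ * V l.succ) (j l.castSucc) (j l.succ)) else 0) ≠ 0 := by
  by_contra! hc
  have h := path_expand n V (fun _ _ => 1)
  have h1 : ∀ l, V l * (V l)ᴴ = 1 := fun l => Matrix.mem_unitaryGroup_iff.1 (hV l)
  have h2 : (Matrix.diagonal (fun _ : Fin d => (1 : ℂ))) = 1 := Matrix.diagonal_one
  simp only [h2, Matrix.mul_one, h1, Finset.prod_const_one, mul_one, hc] at h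
  have h3 : (Matrix.of fun _ _ : Fin d => (0 : ℂ)) = 0 := rfl
  rw [h3, Matrix.mul_zero, Matrix.zero_mul] at h
  have h4 : (List.ofFn fun _ : Fin (n + 1) => (1 : Matrix (Fin d) (Fin d) ℂ)).prod = 1 := by
    rw [List.ofFn_const, List.prod_replicate, one_pow]
  rw [h4] at h
  have := congrFun (congrFun h ⟨0, hd⟩) ⟨0, hd⟩
  simp at this

lemma exists_wChain {d n : ℕ} (V : Fin (n + 1) → Matrix (Fin d) (Fin d) ℂ)
    (a : Fin (n + 1) → Fin d → ℝ)
    (hV : ∀ l, V l ∈ Matrix.unitaryGroup (Fin d) ℂ) (hd : 0 < d) :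
    ∃ i, wChain V a i ≠ 0 := by
  obtain ⟨i, k, hik⟩ := cW_sum V hV hd
  set mid : (Fin (n + 1) → Fin d) → ℝ := fun j =>
    ∏ l ∈ Finset.univ.filter (fun l : Fin (n + 1) => l ≠ 0 ∧ l ≠ Fin.last n), a l (j l)
    with hmid
  rw [← Finset.sum_fiberwise_of_maps_to (t := Finset.univ.image mid)
    (fun j _ => Finset.mem_image_of_mem _ (Finset.mem_univ j))] at hik
  obtain ⟨t, _, ht⟩ := Finset.exists_ne_zero_of_sum_ne_zero hik
  obtain ⟨j, hj, hj0⟩ := Finset.exists_ne_zero_of_sum_ne_zero ht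
  have hjt : mid j = t := (Finset.mem_filter.1 hj).2
  have hjik : j 0 = i ∧ j (Fin.last n) = k := by
    by_contra h
    rw [if_neg h] at hj0
    exact hj0 rfl
  refine ⟨j, ?_⟩
  convert ht using 1
  unfold wChain
  rw [Finset.sum_filter]
  apply Finset.sum_congr rfl
  intro x _
  rw [Set.indicator_apply, ← ite_and]
  refine if_congr ?_ rfl rfl
  rw [Set.mem_setOf_eq, hjik.1, hjik.2, ← hjt]
  tauto

/-- Squared Hilbert–Schmidt norm. -/
noncomputable def tW {d n : ℕ} (V : Fin (n + 1) → Matrix (Fin d) (Fin d) ℂ)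
    (a : Fin (n + 1) → Fin d → ℝ) (p : ℝ) : ℝ := ∑ i, ∑ k, ‖yW V a p i k‖ ^ 2

lemma Z_bounds {d n : ℕ} (hd : 0 < d)
    (A V : Fin (n + 1) → Matrix (Fin d) (Fin d) ℂ)
    (a : Fin (n + 1) → Fin d → ℝ)
    (hV : ∀ l, V l ∈ Matrix.unitaryGroup (Fin d) ℂ) (ha0 : ∀ l i, 0 ≤ a l i)
    (hAd : ∀ l, A l = V l * Matrix.diagonal (fun i => (a l i : ℂ)) * (V l)ᴴ)
    (p : ℝ) (hp : 0 < p) :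
    (tW V a p / d) ^ (1 / p) ≤ eigsDesc (ZmatM A p) ⟨0, hd⟩ ∧
      eigsDesc (ZmatM A p) ⟨0, hd⟩ ≤ (tW V a p) ^ (1 / p) := by
  have hpow : ∀ l r, psdPow (A l) r
      = V l * Matrix.diagonal (fun i => ((a l i ^ r : ℝ) : ℂ)) * (V l)ᴴ := by
    intro l r
    rw [hAd l, psdPow_eq (hV l)]
  have hherm : ∀ l r, (psdPow (A l) r)ᴴ = psdPow (A l) r := by
    intro l r
    rw [hpow]
    exact diag_herm _ _
  have hU' : ∀ l, (V l)ᴴ * V l = 1 := fun l => Matrix.mem_unitaryGroup_iff'.1 (hV l)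
  set P := (List.ofFn fun l : Fin n => psdPow (A l.castSucc) (p / 2)).prod with hP
  set X := (List.ofFn fun l : Fin (n + 1) => psdPow (A l) (p / 2)).prod with hX
  have hXY : X = V 0 * yW V a p * (V (Fin.last n))ᴴ := by
    rw [← half_prod V a ha0 p, hX]
    simp only [hpow]
  have hPr : ((List.ofFn fun l : Fin n => psdPow (A l.castSucc) (p / 2)).reverse).prod = Pᴴ := by
    rw [hP, Matrix.conjTranspose_list_prod, List.map_ofFn]
    congr 2
    congr 1
    funext l
    exact (hherm _ _).symm
  have hXP : X = P * psdPow (A (Fin.last n)) (p / 2) := by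
    rw [hX, List.ofFn_succ', List.concat_eq_append, List.prod_append, List.prod_singleton]
  have hsq : psdPow (A (Fin.last n)) p
      = psdPow (A (Fin.last n)) (p / 2) * psdPow (A (Fin.last n)) (p / 2) := by
    rw [hpow, hpow]
    calc _ = V (Fin.last n) *
        (Matrix.diagonal (fun i => ((a (Fin.last n) i ^ (p / 2) : ℝ) : ℂ)) *
        Matrix.diagonal (fun i => ((a (Fin.last n) i ^ (p / 2) : ℝ) : ℂ)))
          * (V (Fin.last n))ᴴ := by
          rw [Matrix.diagonal_mul_diagonal]
          congr 3
          ext i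
          rw [← Complex.ofReal_mul, ← Real.rpow_add_of_nonneg (ha0 _ _) (by positivity)
            (by positivity), add_halves]
      _ = V (Fin.last n) *
        Matrix.diagonal (fun i => ((a (Fin.last n) i ^ (p / 2) : ℝ) : ℂ)) *
        ((V (Fin.last n))ᴴ * V (Fin.last n)) *
        Matrix.diagonal (fun i => ((a (Fin.last n) i ^ (p / 2) : ℝ) : ℂ))
          * (V (Fin.last n))ᴴ := by
          rw [hU']; simp only [Matrix.mul_assoc, Matrix.one_mul]
      _ = _ := by simp only [Matrix.mul_assoc]
  have hB : P * psdPow (A (Fin.last n)) p * Pᴴ = X * Xᴴ := by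
    rw [hXP, hsq, Matrix.conjTranspose_mul, hherm]
    simp only [Matrix.mul_assoc]
  have hZ : ZmatM A p = psdPow (X * Xᴴ) (1 / p) := by
    rw [← hB, ← hPr]; rfl
  have hpsd : (X * Xᴴ).PosSemidef := Matrix.posSemidef_self_mul_conjTranspose X
  have hH := hpsd.isHermitian
  have htr : ∑ i, hH.eigenvalues i = tW V a p := by
    have h1 : (X * Xᴴ).trace = ∑ i, (hH.eigenvalues i : ℂ) := hH.trace_eq_sum_eigenvalues
    have h2 : (X * Xᴴ).trace = (tW V a p : ℂ) := by
      have : X * Xᴴ = V 0 * (yW V a p * (yW V a p)ᴴ) * (V 0)ᴴ := by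
        rw [hXY]
        simp only [Matrix.conjTranspose_mul, Matrix.conjTranspose_conjTranspose]
        calc _ = V 0 * yW V a p * ((V (Fin.last n))ᴴ * V (Fin.last n))
            * (yW V a p)ᴴ * (V 0)ᴴ := by simp only [Matrix.mul_assoc]
          _ = _ := by rw [hU']; simp only [Matrix.mul_assoc, Matrix.one_mul]
      rw [this, Matrix.trace_mul_comm, ← Matrix.mul_assoc, hU', Matrix.one_mul]
      simp only [Matrix.trace, Matrix.diag_apply, Matrix.mul_apply, Matrix.conjTranspose_apply,
        tW, Complex.ofReal_sum, Complex.ofReal_pow]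
      refine Finset.sum_congr rfl fun i _ => Finset.sum_congr rfl fun k _ => ?_
      exact Complex.mul_conj' _
    rw [h2] at h1
    exact_mod_cast h1.symm
  have hZ2 : ZmatM A p = (hH.eigenvectorUnitary : Matrix (Fin d) (Fin d) ℂ) *
      Matrix.diagonal (fun i => ((hH.eigenvalues i ^ (1 / p) : ℝ) : ℂ)) *
      (hH.eigenvectorUnitary : Matrix (Fin d) (Fin d) ℂ)ᴴ := by
    rw [hZ, psdPow, dif_pos hH]; rfl
  obtain ⟨⟨i, hi⟩, hmax⟩ := eigsDesc_eq hd (y := fun i => hH.eigenvalues i ^ (1 / p))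
    (hH.eigenvectorUnitary).2
  rw [← hZ2] at hi hmax
  have hnn : ∀ i, 0 ≤ hH.eigenvalues i := fun i => hpsd.eigenvalues_nonneg i
  have hpp : 0 < 1 / p := by positivity
  have hd' : (0 : ℝ) < d := by exact_mod_cast hd
  constructor
  · rw [hi] at hmax ⊢
    apply Real.rpow_le_rpow _ _ hpp.le
    · rw [← htr]; exact div_nonneg (Finset.sum_nonneg fun i _ => hnn i) hd'.le
    · rw [div_le_iff₀ hd', ← htr]
      calc ∑ j, hH.eigenvalues j ≤ ∑ _j : Fin d, hH.eigenvalues i :=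
            Finset.sum_le_sum fun j _ =>
              (Real.rpow_le_rpow_iff (hnn j) (hnn i) hpp).1 (hmax j)
        _ = _ := by simp [mul_comm]
  · rw [hi]
    apply Real.rpow_le_rpow (hnn i) _ hpp.le
    rw [← htr]
    exact Finset.single_le_sum (fun j _ => hnn j) (Finset.mem_univ i)

lemma rpow_inv_tendsto {f : ℝ → ℝ} {L : ℝ} (hL : 0 < L) (h : Tendsto f atTop (𝓝 L)) :
    Tendsto (fun p : ℝ => f p ^ (1 / p)) atTop (𝓝 1) := by
  have h0 : Tendsto (fun p : ℝ => 1 / p) atTop (𝓝 0) := by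
    simpa using tendsto_inv_atTop_zero (𝕜 := ℝ)
  simpa using h.rpow h0 (Or.inl hL.ne')

/-- For `n + 1` positive semidefinite matrices, the largest eigenvalue `λ_1(p)` of
`Z_p = (A_0^{p/2} ⋯ A_{n-1}^{p/2} A_n^p A_{n-1}^{p/2} ⋯ A_0^{p/2})^{1/p}` converges as
`p → ∞`; the limit is `max{ a^{(0)}_{i_0} ⋯ a^{(n)}_{i_n} : w(i_0,…,i_n) ≠ 0 }` and lies
between `a^{(0)}_d ⋯ a^{(n)}_d` and `a^{(0)}_1 ⋯ a^{(n)}_1`. -/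
theorem anti_lie_trotter_multi_top_eigenvalue
    {d n : ℕ} (hd : 0 < d)
    (A V : Fin (n + 1) → Matrix (Fin d) (Fin d) ℂ)
    (a : Fin (n + 1) → Fin d → ℝ)
    (hA : ∀ l, (A l).PosSemidef)
    (hV : ∀ l, V l ∈ Matrix.unitaryGroup (Fin d) ℂ)
    (ha : ∀ l, Antitone (a l)) (ha0 : ∀ l i, 0 ≤ a l i)
    (hAd : ∀ l, A l = V l * Matrix.diagonal (fun i => (a l i : ℂ)) * (V l)ᴴ) :
    ∃ lam1 : ℝ,
      Tendsto (fun p : ℝ => eigsDesc (ZmatM A p) ⟨0, hd⟩) atTop (𝓝 lam1) ∧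
      IsGreatest
        {x : ℝ | ∃ i : Fin (n + 1) → Fin d, wChain V a i ≠ 0 ∧ x = ∏ l, a l (i l)}
        lam1 ∧
      lam1 ≤ ∏ l, a l ⟨0, hd⟩ ∧
      (∏ l, a l ⟨d - 1, Nat.sub_lt hd one_pos⟩) ≤ lam1 := by
  classical
  -- the maximum
  obtain ⟨i₀, hi₀⟩ := exists_wChain V a hV hd
  obtain ⟨im, him, hmax⟩ := Finset.exists_max_image
    (Finset.univ.filter fun i => wChain V a i ≠ 0) (fun i => ∏ l, a l (i l))
    ⟨i₀, by simp [hi₀]⟩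
  replace him : wChain V a im ≠ 0 := (Finset.mem_filter.1 him).2
  replace hmax : ∀ i, wChain V a i ≠ 0 → ∏ l, a l (i l) ≤ ∏ l, a l (im l) :=
    fun i hi => hmax i (by simp [hi])
  obtain ⟨M, hM⟩ : ∃ M, M = ∏ l, a l (im l) := ⟨_, rfl⟩
  have hM0 : 0 ≤ M := hM ▸ Finset.prod_nonneg fun l _ => ha0 l _
  rw [← hM] at hmax
  have hc0 : ∀ i k t, 0 < t → M < t → cW V a i k t = 0 := by
    intro i k t ht0 htM
    by_contra hne
    obtain ⟨j, _, hj⟩ := Finset.exists_ne_zero_of_sum_ne_zero hne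
    have hjt : ∏ l, a l (j l) = t := by
      by_contra h
      rw [if_neg h] at hj
      exact hj rfl
    rw [if_pos hjt] at hj
    have hjik : j 0 = i ∧ j (Fin.last n) = k := by
      by_contra h
      rw [if_neg h] at hj
      exact hj rfl
    have hw := wChain_eq_cW V a j (by rw [hjt]; exact ht0.ne')
    rw [hjik.1, hjik.2, hjt] at hw
    have := hmax j (by rw [hw]; exact hne)
    rw [hjt] at this
    exact absurd this (not_le.2 htM)
  have hpW : ∀ t ∈ pW a, 0 ≤ t := by
    intro t ht
    obtain ⟨j, _, rfl⟩ := Finset.mem_image.1 ht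
    exact Finset.prod_nonneg fun l _ => ha0 l _
  refine ⟨M, ?_, ⟨⟨im, him, hM⟩, ?_⟩, ?_, ?_⟩
  · have hb := Z_bounds hd A V a hV ha0 hAd
    have hd' : (0 : ℝ) < d := by exact_mod_cast hd
    rcases hM0.eq_or_lt with h0 | hpos
    · have hT : ∀ p : ℝ, 0 < p → tW V a p = 0 := by
        intro p hp
        apply Finset.sum_eq_zero
        intro i _
        apply Finset.sum_eq_zero
        intro k _
        have : yW V a p i k = 0 := by
          apply Finset.sum_eq_zero
          intro t ht
          rcases (hpW t ht).eq_or_lt with h | h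
          · rw [← h, Real.zero_rpow (by positivity)]; simp
          · rw [hc0 i k t h (h0 ▸ h), zero_mul]
        rw [this]; simp
      apply tendsto_const_nhds.congr'
      filter_upwards [eventually_gt_atTop 0] with p hp
      have h1 := hb p hp
      have hp' : 1 / p ≠ 0 := by positivity
      rw [hT p hp, zero_div, Real.zero_rpow hp'] at h1
      rw [← h0]
      exact le_antisymm h1.1 h1.2
    · -- entries converge after normalization
      have hY : ∀ i k, Tendsto (fun p : ℝ => ∑ t ∈ pW a,
          cW V a i k t * (((t / M) ^ (p / 2) : ℝ) : ℂ)) atTop (𝓝 (cW V a i k M)) := by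
        intro i k
        have hMm : M ∈ pW a := hM ▸ Finset.mem_image_of_mem _ (Finset.mem_univ im)
        have hs : cW V a i k M = ∑ t ∈ pW a, if t = M then cW V a i k t else 0 := by
          rw [Finset.sum_ite_eq' , if_pos hMm]
        rw [hs]
        apply tendsto_finset_sum
        intro t ht
        rcases lt_trichotomy t M with h | h | h
        · rw [if_neg h.ne]
          have hlt : t / M < 1 := (div_lt_one hpos).2 h
          have hge : 0 ≤ t / M := div_nonneg (hpW t ht) hM0
          have h1 : Tendsto (fun p : ℝ => (t / M) ^ (p / 2)) atTop (𝓝 0) :=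
            (tendsto_rpow_atTop_of_base_lt_one _ (by linarith) hlt).comp
              (tendsto_id.atTop_div_const (by norm_num))
          have h2 := (Complex.continuous_ofReal.tendsto 0).comp h1
          simpa using h2.const_mul (cW V a i k t)
        · subst h
          simp only [if_true, div_self hpos.ne', Real.one_rpow, Complex.ofReal_one, mul_one]
          exact tendsto_const_nhds
        · rw [if_neg h.ne', hc0 i k t (hpos.trans h) h]
          simp
      have hL : Tendsto (fun p : ℝ => tW V a p / M ^ p) atTop
          (𝓝 (∑ i, ∑ k, ‖cW V a i k M‖ ^ 2)) := by
        have h1 : Tendsto (fun p : ℝ => ∑ i, ∑ k, ‖∑ t ∈ pW a,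
          cW V a i k t * (((t / M) ^ (p / 2) : ℝ) : ℂ)‖ ^ 2) atTop
          (𝓝 (∑ i, ∑ k, ‖cW V a i k M‖ ^ 2)) :=
          tendsto_finset_sum _ fun i _ => tendsto_finset_sum _ fun k _ => (hY i k).norm.pow 2
        refine h1.congr fun p => ?_
        rw [tW, Finset.sum_div]
        refine Finset.sum_congr rfl fun i _ => ?_
        rw [Finset.sum_div]
        refine Finset.sum_congr rfl fun k _ => ?_
        have hMp : M ^ p = (M ^ (p / 2)) ^ 2 := by
          rw [sq, ← Real.rpow_add hpos, add_halves]
        have hMq : 0 < M ^ (p / 2) := Real.rpow_pos_of_pos hpos _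
        rw [hMp, ← div_pow]
        congr 1
        have : (∑ t ∈ pW a, cW V a i k t * (((t / M) ^ (p / 2) : ℝ) : ℂ))
            = yW V a p i k / ((M ^ (p / 2) : ℝ) : ℂ) := by
          rw [yW, Matrix.of_apply, Finset.sum_div]
          refine Finset.sum_congr rfl fun t ht => ?_
          rw [Real.div_rpow (hpW t ht) hM0, Complex.ofReal_div, mul_div_assoc]
        rw [this, norm_div, Complex.norm_real, Real.norm_of_nonneg hMq.le]
      have hLpos : 0 < ∑ i, ∑ k, ‖cW V a i k M‖ ^ 2 := by
        have hne : cW V a (im 0) (im (Fin.last n)) M ≠ 0 := by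
          rw [hM, ← wChain_eq_cW V a im (by rw [← hM]; exact hpos.ne')]
          exact him
        refine Finset.sum_pos' (fun i _ => Finset.sum_nonneg fun k _ => by positivity)
          ⟨im 0, Finset.mem_univ _, ?_⟩
        refine Finset.sum_pos' (fun k _ => by positivity)
          ⟨im (Fin.last n), Finset.mem_univ _, ?_⟩
        have := norm_pos_iff.2 hne
        positivity
      have hTnn : ∀ p, 0 ≤ tW V a p := fun p =>
        Finset.sum_nonneg fun i _ => Finset.sum_nonneg fun k _ => by positivity
      have key : ∀ c : ℝ, 0 < c →
          Tendsto (fun p : ℝ => (tW V a p / c) ^ (1 / p)) atTop (𝓝 M) := by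
        intro c hc
        have h1 := (rpow_inv_tendsto (div_pos hLpos hc) (hL.div_const c)).const_mul M
        rw [mul_one] at h1
        apply h1.congr'
        filter_upwards [eventually_gt_atTop 0] with p hp
        have hMp : 0 < M ^ p := Real.rpow_pos_of_pos hpos _
        have e : tW V a p / c = M ^ p * (tW V a p / M ^ p / c) := by field_simp
        rw [e, Real.mul_rpow hMp.le (div_nonneg (div_nonneg (hTnn p) hMp.le) hc.le),
          ← Real.rpow_mul hM0, mul_one_div_cancel hp.ne', Real.rpow_one]
      have k1 := key 1 one_pos
      simp only [div_one] at k1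
      refine tendsto_of_tendsto_of_tendsto_of_le_of_le' (key d hd') k1 ?_ ?_
      · filter_upwards [eventually_gt_atTop 0] with p hp using (hb p hp).1
      · filter_upwards [eventually_gt_atTop 0] with p hp using (hb p hp).2
  · rintro x ⟨i, hi, rfl⟩
    exact hmax i hi
  · rw [hM]
    exact Finset.prod_le_prod (fun l _ => ha0 l _) fun l _ =>
      ha l (Fin.le_def.2 (Nat.zero_le _))
  · rw [hM]
    exact Finset.prod_le_prod (fun l _ => ha0 l _) fun l _ =>
      ha l (Fin.le_def.2 (by have := (im l).2; simp only; omega))
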